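/- arXiv:2602.02854 — 2 statements merged into one kernel-verified Lean document; each statement's English description precedes it below -/
import Mathlib

section
/- Let T be a theory in a first-order language L, and suppose T has a model N such that (i) N embeds into every model of T, and (ii) every element of N is the interpretation of some constant symbol of L. Then every model M of T in which every element is the interpretation of some constant symbol of L is isomorphic to N. In particular, any two models of T in which every element is the interpretation of a constant symbol are isomorphic. -/
open FirstOrder Language

universe u v w

section

variable {L : FirstOrder.Language.{u, v}} {M N : Type*} [L.Structure M] [L.Structure N]

theorem surjective_of_constantMap_surjective {F : Type*} [FunLike F M N] [HomClass L F M N]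
    (f : F) (hN : Function.Surjective (constantMap : L.Constants → N)) : Function.Surjective f := by
  intro y
  obtain ⟨c, rfl⟩ := hN y
  exact ⟨constantMap c, HomClass.map_constants f c⟩

/-- The isomorphism of first-order structures given by a surjective embedding. -/
noncomputable def embeddingEquivOfSurjective (f : M ↪[L] N) (hf : Function.Surjective f) :
    M ≃[L] N where
  toEquiv := Equiv.ofBijective f ⟨f.injective, hf⟩
  map_fun' := f.map_fun'
  map_rel' := f.map_rel'

theorem nonempty_equiv_of_embedding_of_constantMap_surjective (f : M ↪[L] N)
    (hN : Function.Surjective (constantMap : L.Constants → N)) : Nonempty (M ≃[L] N) :=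
  ⟨embeddingEquivOfSurjective f (surjective_of_constantMap_surjective f hN)⟩

end

theorem stmt_8_general {L : FirstOrder.Language.{u, v}} (T : L.Theory) (N : Type*) [L.Structure N]
    (hembed : ∀ (M : Type w) [L.Structure M], M ⊨ T →
      Function.Surjective (constantMap : L.Constants → M) → Nonempty (N ↪[L] M)) :
    (∀ (M : Type w) [L.Structure M], M ⊨ T →
      Function.Surjective (constantMap : L.Constants → M) → Nonempty (M ≃[L] N)) ∧
    (∀ (M₁ : Type w) [L.Structure M₁] (M₂ : Type w) [L.Structure M₂], M₁ ⊨ T → M₂ ⊨ T →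
      Function.Surjective (constantMap : L.Constants → M₁) →
      Function.Surjective (constantMap : L.Constants → M₂) →
      Nonempty (M₁ ≃[L] M₂)) := by
  have equiv_of_named : ∀ (M : Type w) [L.Structure M], M ⊨ T →
      Function.Surjective (constantMap : L.Constants → M) → Nonempty (M ≃[L] N) := by
    intro M _ hM hMnamed
    obtain ⟨f⟩ := hembed M hM hMnamed
    obtain ⟨e⟩ := nonempty_equiv_of_embedding_of_constantMap_surjective f hMnamed
    exact ⟨e.symm⟩
  refine ⟨equiv_of_named, fun M₁ _ M₂ _ hM₁ hM₂ hnamed₁ hnamed₂ => ?_⟩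
  obtain ⟨e₁⟩ := equiv_of_named M₁ hM₁ hnamed₁
  obtain ⟨e₂⟩ := equiv_of_named M₂ hM₂ hnamed₂
  exact ⟨e₂.symm.comp e₁⟩

/-- **Corollary apcat.**  If a first-order theory `T` has an algebraically prime model `N`
(one that embeds into every model of `T`) in which every element is named by a constant,
then every model of `T` in which every element is named by a constant is isomorphic to
`N`; in particular any two such models are isomorphic. -/
theorem stmt_8 {L : FirstOrder.Language.{u, v}} (T : L.Theory) (N : Type w) [L.Structure N]
    (hNmod : N ⊨ T)
    (hprime : ∀ (M : Type w) [L.Structure M], M ⊨ T → Nonempty (N ↪[L] M))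
    (hNnamed : ∀ x : N, ∃ c : L.Constants, (constantMap c : N) = x) :
    (∀ (M : Type w) [L.Structure M], M ⊨ T →
      (∀ x : M, ∃ c : L.Constants, (constantMap c : M) = x) → Nonempty (M ≃[L] N)) ∧
    (∀ (M₁ : Type w) [L.Structure M₁] (M₂ : Type w) [L.Structure M₂], M₁ ⊨ T → M₂ ⊨ T →
      (∀ x : M₁, ∃ c : L.Constants, (constantMap c : M₁) = x) →
      (∀ x : M₂, ∃ c : L.Constants, (constantMap c : M₂) = x) →
      Nonempty (M₁ ≃[L] M₂)) :=
  stmt_8_general T N fun M _ hM _ => hprime M hM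
end

section
/- Let L be the first-order language with two unary relation symbols F and G and countably many constant symbols c₀, c₁, c₂, …, and let T be the L-theory asserting cᵢ ≠ cⱼ for all i ≠ j. Then there exists a family, indexed by the functions s : ℕ → Fin 4, of models M_s of T such that in each M_s every element is the interpretation of some constant symbol, and M_s is not isomorphic to M_t whenever s ≠ t. In particular, T has 2^ℵ₀ pairwise non-isomorphic countable models in each of which every element is named by a constant. -/
open FirstOrder Language

/-- The language with two unary relation symbols `F`, `G` and countably many constant
symbols `c₀, c₁, c₂, …`. -/
def L16 : FirstOrder.Language :=
  ⟨fun n => match n with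
    | 0 => ℕ
    | _ + 1 => Empty,
   fun n => match n with
    | 1 => Fin 2
    | 0 => Empty
    | _ + 2 => Empty⟩

/-- The `i`-th constant symbol of `L16`. -/
def c16 (i : ℕ) : L16.Constants := i

/-- The theory asserting that the constants are pairwise distinct: `cᵢ ≠ cⱼ` for `i ≠ j`. -/
def T16 : L16.Theory :=
  {σ | ∃ i j : ℕ, i ≠ j ∧ σ = ∼(Term.equal (Constants.term (c16 i)) (Constants.term (c16 j)))}

/-! Homomorphisms preserve the interpretations of constants, and strong homomorphisms (such as
embeddings and isomorphisms) also preserve and reflect relations. Hence the set of predicates true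
of `cᵢ`, as a function of `i`, is an isomorphism invariant. Every function from `ℕ` to sets of
predicates occurs as this invariant for a structure on `ℕ` interpreting `cᵢ` as `i`, and the four
sets of predicates are the four Boolean combinations of `F` and `G`. -/

theorem relMap_constantMap_iff {L : FirstOrder.Language} {M N H : Type*}
    [L.Structure M] [L.Structure N] [FunLike H M N] [L.StrongHomClass H M N]
    (φ : H) {n : ℕ} (r : L.Relations n) (c : Fin n → L.Constants) :
    Structure.RelMap r (fun k => (c k : N)) ↔ Structure.RelMap r (fun k => (c k : M)) := by
  simpa only [Function.comp_def, HomClass.map_constants] using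
    StrongHomClass.map_rel φ r fun k => (c k : M)

namespace L16

/-- The unary relation symbols of `L16`: `F` is `predicate 0` and `G` is `predicate 1`. -/
def predicate (r : Fin 2) : L16.Relations 1 := r

theorem model_T16_iff {M : Type*} [L16.Structure M] :
    M ⊨ T16 ↔ Function.Injective fun i => (c16 i : M) := by
  have realize_ne (i j : ℕ) :
      M ⊨ (∼(Term.equal (Constants.term (c16 i)) (Constants.term (c16 j))) : L16.Sentence) ↔
        (c16 i : M) ≠ c16 j := by
    rw [Sentence.Realize, Formula.realize_not, Formula.realize_equal,
      Term.realize_constants, Term.realize_constants]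
  rw [Theory.model_iff]
  constructor
  · intro h i j hij
    by_contra hne
    exact (realize_ne i j).1 (h _ ⟨i, j, hne, rfl⟩) hij
  · rintro h _ ⟨i, j, hne, rfl⟩
    exact (realize_ne i j).2 (h.ne hne)

/-- The isomorphism invariant of an `L16`-structure `M` sending `i` to the set of (indices of)
predicates that hold in `M` of the interpretation of `cᵢ`. -/
def predicatesAt (M : Type*) [L16.Structure M] (i : ℕ) : Set (Fin 2) :=
  {r | Structure.RelMap (predicate r) fun _ => (c16 i : M)}

theorem predicatesAt_eq_of_strongHom {M N H : Type*} [L16.Structure M] [L16.Structure N]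
    [FunLike H M N] [L16.StrongHomClass H M N] (φ : H) : predicatesAt M = predicatesAt N := by
  funext i
  ext r
  exact (relMap_constantMap_iff φ (predicate r) fun _ => c16 i).symm

/-- The universe of the `L16`-structure on `ℕ` in which `cᵢ` is interpreted as `i` and the
predicates true of `i` are those with index in `P i`. It is a type synonym, so that each `P` has
its own `L16.Structure` instance. -/
def NatModel (_P : ℕ → Set (Fin 2)) : Type := ℕ

namespace NatModel

variable (P : ℕ → Set (Fin 2))

instance : Countable (NatModel P) := inferInstanceAs (Countable ℕ)

instance : L16.Structure (NatModel P) where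
  funMap {n} f _ := match n, f with
    | 0, i => i
    | _ + 1, f => f.elim
  RelMap {n} r x := match n, r, x with
    | 0, r, _ => r.elim
    | 1, r, x => r ∈ P (x 0)
    | _ + 2, r, _ => r.elim

theorem bijective_constantMap : Function.Bijective fun i => (constantMap (c16 i) : NatModel P) :=
  Function.bijective_id

instance : NatModel P ⊨ T16 := model_T16_iff.2 (bijective_constantMap P).injective

theorem exists_constantMap_eq (m : NatModel P) :
    ∃ c : L16.Constants, (constantMap c : NatModel P) = m :=
  let ⟨i, hi⟩ := (bijective_constantMap P).surjective m
  ⟨c16 i, hi⟩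

theorem predicatesAt_eq : predicatesAt (NatModel P) = P := rfl

theorem eq_of_strongHom {P Q : ℕ → Set (Fin 2)} {H : Type*} [FunLike H (NatModel P) (NatModel Q)]
    [L16.StrongHomClass H (NatModel P) (NatModel Q)] (φ : H) : P = Q := by
  rw [← predicatesAt_eq P, predicatesAt_eq_of_strongHom φ, predicatesAt_eq]

end NatModel

/-- The Boolean combinations `F ∧ G`, `F ∧ ¬G`, `¬F ∧ G`, `¬F ∧ ¬G`, in this order, each encoded
as the set of indices of the predicates occurring positively (`0` for `F` and `1` for `G`). -/
def booleanCombination : Fin 4 → Finset (Fin 2) := ![{0, 1}, {0}, {1}, ∅]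

theorem booleanCombination_injective : Function.Injective booleanCombination := by decide

end L16

/-- **Continuum many named countable models (Example neccond 3).**  The theory asserting
that countably many constants are pairwise distinct, in a language with two unary
predicates `F` and `G`, has a family of pairwise non-isomorphic countable models indexed
by the functions `s : ℕ → Fin 4` (the four Boolean combinations of `F` and `G`), in each
of which every element is the interpretation of some constant symbol.  In particular it
has `2^ℵ₀` pairwise non-isomorphic countable models in which every element is named. -/
theorem stmt_16 :
    ∃ (Mf : (ℕ → Fin 4) → Type) (inst : ∀ s, L16.Structure (Mf s)),
      (∀ s, letI := inst s
        (Mf s ⊨ T16) ∧ Countable (Mf s) ∧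
          ∀ m : Mf s, ∃ c : L16.Constants, (constantMap c : Mf s) = m) ∧
      (∀ s t, s ≠ t →
        letI := inst s
        letI := inst t
        IsEmpty (Mf s ≃[L16] Mf t)) := by
  let P (s : ℕ → Fin 4) (i : ℕ) : Set (Fin 2) := L16.booleanCombination (s i)
  have P_injective : Function.Injective P :=
    (Finset.coe_injective.comp L16.booleanCombination_injective).comp_left
  refine ⟨fun s => L16.NatModel (P s), fun _ => inferInstance, fun s => ?_, fun s t hst => ?_⟩
  · exact ⟨inferInstance, inferInstance, L16.NatModel.exists_constantMap_eq (P s)⟩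
  · exact ⟨fun e => hst (P_injective (L16.NatModel.eq_of_strongHom e))⟩
end
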